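/- arXiv:1211.2128 — 5 statements merged into one kernel-verified Lean document; each statement's English description precedes it below -/
import Mathlib

section
/- Assume (S), (F1∞)–(F3∞), (C1∞)–(C2∞) and (SE∞), and let h∞ : {z ∈ H⁰∞ : ‖z‖ ≥ R₁} → {x ∈ X^±∞ : ‖x‖_X ≤ ρ_A} be the unique map satisfying (I−P⁰∞)A(z + h∞(z)) = θ (which exists after increasing R₁, since (SE∞) implies (E∞) for suitable κ > 1 and R₁). Then h∞ is strictly Fréchet differentiable at infinity with strict Fréchet derivative zero: for every ε > 0 there exists R ≥ R₁ such that ‖h∞(z₂) − h∞(z₁)‖_X ≤ ε ‖z₂ − z₁‖_X for all z₁, z₂ ∈ H⁰∞ with ‖z₁‖ ≥ R and ‖z₂‖ ≥ R. -/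
/-!
Put `F(z, x) = (I − P⁰∞)A(z + x) − B(∞)x`. Since `(I − P⁰∞)A(z + h∞(z)) = 0`, the difference
`F(z₁, h∞(z₁)) − F(z₂, h∞(z₂))` is `B(∞)(h∞(z₂) − h∞(z₁))`. The smallness condition makes `F`
`η`-Lipschitz far out, and `B(∞)` has an inverse on `X^±∞` bounded by `C₁`, so
`‖h∞(z₂) − h∞(z₁)‖ ≤ C₁ η (‖z₂ − z₁‖ + ‖h∞(z₂) − h∞(z₁)‖)`; for small `η` the last term is
absorbed on the left.

The smallness condition is stated on the open ball of radius `ρ_A`, while `h∞` takes values in the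
closed ball. The estimate passes to the closed ball by letting `t ↑ 1` in `t • x₁`, `t • x₂`
(`LuSetting.SEcond.closedBall`). This needs `A` to be continuous at `z + x`, which holds because
`z ⊥ x` in `H`, so `‖z + x‖ ≥ ‖z‖` and `z + x` stays in `V`.
-/

open Filter Topology Set RealInnerProductSpace

noncomputable section

/-- The setting of Lu's splitting lemmas at infinity: a real Hilbert space `H`, a Banach
space `X` densely and continuously embedded in `H` (condition (S)), a neighborhood of
infinity `V`, a functional `L` satisfying (F1∞)–(F3∞), conditions (C1∞)–(C2∞), and the
spectral decomposition `H = H⁰∞ ⊕ H⁺∞ ⊕ H⁻∞` of `B(∞)` with the associated orthogonal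
projections. -/
structure LuSetting (X H : Type*) [NormedAddCommGroup X] [NormedSpace ℝ X]
    [NormedAddCommGroup H] [InnerProductSpace ℝ H] [CompleteSpace H] where
  /-- the inclusion `X ↪ H` -/
  emb : X →L[ℝ] H
  emb_inj : Function.Injective emb
  emb_dense : DenseRange emb
  emb_norm : ∀ x : X, ‖emb x‖ ≤ ‖x‖
  /-- `V` is a neighborhood of infinity in `H` -/
  R₀ : ℝ
  R₀_pos : 0 < R₀
  V : Set H
  V_open : IsOpen V
  V_infty : {u : H | R₀ < ‖u‖} ⊆ V
  /-- the functional `L` and its directional differential `DL` (condition (F1∞)) -/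
  L : H → ℝ
  DL : H → H → ℝ
  L_cont : ContinuousOn L V
  DL_deriv : ∀ x ∈ V, ∀ u : H,
    Filter.Tendsto (fun t : ℝ => (L (x + t • u) - L x) / t) (𝓝[≠] 0) (𝓝 (DL x u))
  DL_cont : ContinuousOn (fun p : H × H => DL p.1 p.2) (V ×ˢ Set.univ)
  /-- the map `A` and its directional differential `DA` (condition (F2∞)) -/
  A : X → X
  DA : X → X → X
  A_cont : ContinuousOn A {x : X | emb x ∈ V}
  DA_deriv : ∀ x : X, emb x ∈ V → ∀ u : X,
    Filter.Tendsto (fun t : ℝ => t⁻¹ • (A (x + t • u) - A x)) (𝓝[≠] 0) (𝓝 (DA x u))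
  DA_cont : ContinuousOn (fun p : X × X => DA p.1 p.2) ({x : X | emb x ∈ V} ×ˢ Set.univ)
  A_repr : ∀ x : X, emb x ∈ V → ∀ u : X, DL (emb x) (emb u) = ⟪emb (A x), emb u⟫
  /-- the operators `B(x)` and `B(∞)` (condition (F3∞)) -/
  B : X → H →L[ℝ] H
  Binf : H →L[ℝ] H
  B_symm : ∀ x : X, emb x ∈ V → ∀ u v : H, ⟪B x u, v⟫ = ⟪u, B x v⟫
  Binf_symm : ∀ u v : H, ⟪Binf u, v⟫ = ⟪u, Binf v⟫
  /-- `B(∞)` preserves `X`; `BinfX` is its restriction `X → X` -/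
  BinfX : X →L[ℝ] X
  BinfX_emb : ∀ x : X, emb (BinfX x) = Binf (emb x)
  B_repr : ∀ x : X, emb x ∈ V → ∀ u v : X, ⟪emb (DA x u), emb v⟫ = ⟪B x (emb u), emb v⟫
  /-- (C1∞): `0` is not in the spectrum of `B(∞)`, or is an isolated point of it -/
  C1 : (0 : ℝ) ∉ spectrum ℝ Binf ∨ ∃ ε > (0 : ℝ), ∀ μ ∈ spectrum ℝ Binf, μ = 0 ∨ ε ≤ |μ|
  /-- (C2∞) -/
  C2 : ∀ u : H, (∃ w : X, emb w = Binf u) → ∃ x : X, emb x = u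
  /-- the kernel `H⁰∞` of `B(∞)` and the positive and negative definite subspaces
  `H⁺∞`, `H⁻∞`, forming an orthogonal decomposition of `H` invariant under `B(∞)` -/
  H0 : Submodule ℝ H
  Hp : Submodule ℝ H
  Hm : Submodule ℝ H
  H0_eq : ∀ u : H, u ∈ H0 ↔ Binf u = 0
  Hp_closed : IsClosed (Hp : Set H)
  Hm_closed : IsClosed (Hm : Set H)
  orth_pm : ∀ u ∈ Hp, ∀ v ∈ Hm, ⟪u, v⟫ = 0
  orth_0p : ∀ u ∈ H0, ∀ v ∈ Hp, ⟪u, v⟫ = 0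
  orth_0m : ∀ u ∈ H0, ∀ v ∈ Hm, ⟪u, v⟫ = 0
  span_all : H0 ⊔ Hp ⊔ Hm = ⊤
  Binf_Hp : ∀ u ∈ Hp, Binf u ∈ Hp
  Binf_Hm : ∀ u ∈ Hm, Binf u ∈ Hm
  /-- the definiteness gap `a∞ > 0` -/
  ainf : ℝ
  ainf_pos : 0 < ainf
  Binf_posdef : ∀ u ∈ Hp, 2 * ainf * ‖u‖ ^ 2 ≤ ⟪Binf u, u⟫
  Binf_negdef : ∀ u ∈ Hm, ⟪Binf u, u⟫ ≤ -(2 * ainf * ‖u‖ ^ 2)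
  /-- the orthogonal projection `P⁰∞` onto `H⁰∞` -/
  P0 : H →L[ℝ] H
  P0_H0 : ∀ u ∈ H0, P0 u = u
  P0_Hp : ∀ u ∈ Hp, P0 u = (0 : H)
  P0_Hm : ∀ u ∈ Hm, P0 u = (0 : H)
  /-- the orthogonal projection `P⁺∞` onto `H⁺∞` -/
  Pp : H →L[ℝ] H
  Pp_H0 : ∀ u ∈ H0, Pp u = (0 : H)
  Pp_Hp : ∀ u ∈ Hp, Pp u = u
  Pp_Hm : ∀ u ∈ Hm, Pp u = (0 : H)
  /-- the orthogonal projection `P⁻∞` onto `H⁻∞` -/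
  Pm : H →L[ℝ] H
  Pm_H0 : ∀ u ∈ H0, Pm u = (0 : H)
  Pm_Hp : ∀ u ∈ Hp, Pm u = (0 : H)
  Pm_Hm : ∀ u ∈ Hm, Pm u = u
  /-- the restriction of `P⁰∞` to `X` (well defined since `H⁰∞ ⊆ X` by (C2∞)) -/
  P0X : X →L[ℝ] X
  P0X_emb : ∀ x : X, emb (P0X x) = P0 (emb x)

namespace LuSetting

variable {X H : Type*} [NormedAddCommGroup X] [NormedSpace ℝ X]
  [NormedAddCommGroup H] [InnerProductSpace ℝ H] [CompleteSpace H]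
variable (S : LuSetting X H)

/-- `H^±∞ = H⁺∞ ⊕ H⁻∞` -/
def Hpm : Submodule ℝ H := S.Hp ⊔ S.Hm

/-- `X^±∞ = H^±∞ ∩ X` -/
def Xpm : Submodule ℝ X := S.Hpm.comap (S.emb : X →ₗ[ℝ] H)

/-- the map `(I − P⁰∞)A : X → X` -/
def Aperp (x : X) : X := S.A x - S.P0X (S.A x)

/-- `{z ∈ H⁰∞ : ‖z‖ > R}`, realized inside `X` -/
def zdom (R : ℝ) : Set X := {z : X | S.emb z ∈ S.H0 ∧ R < ‖S.emb z‖}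

/-- `{z ∈ H⁰∞ : ‖z‖ ≥ R}`, realized inside `X` -/
def zdomCl (R : ℝ) : Set X := {z : X | S.emb z ∈ S.H0 ∧ R ≤ ‖S.emb z‖}

/-- the set `{z + u : z ∈ H⁰∞, ‖z‖ > R, u ∈ H^±∞}` -/
def slab (R : ℝ) : Set H := {w : H | ∃ z ∈ S.H0, ∃ u ∈ S.Hpm, R < ‖z‖ ∧ w = z + u}

/-- the set `C_{R,δ}` -/
def cyl (R δ : ℝ) : Set H :=
  {w : H | ∃ z ∈ S.H0, ∃ up ∈ S.Hp, ∃ um ∈ S.Hm,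
    R < ‖z‖ ∧ ‖up‖ < δ ∧ ‖um‖ < δ ∧ w = z + up + um}

/-- `C₁` is a bound for the norm of the inverse of the Banach isomorphism
`B(∞)|_{X^±∞} : X^±∞ → X^±∞` (in particular `C₁∞ ≤ C₁`) -/
def InvBound (C₁ : ℝ) : Prop :=
  0 < C₁ ∧ (∀ x ∈ S.Xpm, S.BinfX x ∈ S.Xpm) ∧
    (∀ y ∈ S.Xpm, ∃ x ∈ S.Xpm, S.BinfX x = y) ∧
    ∀ x ∈ S.Xpm, ‖x‖ ≤ C₁ * ‖S.BinfX x‖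

/-- `m` is an eventual bound for `‖(I−P⁰∞)A(z)‖_X` on `H⁰∞`, i.e. `M(A) ≤ m < ∞` -/
def MBound (m : ℝ) : Prop :=
  0 ≤ m ∧ ∃ R : ℝ, ∀ z : X, S.emb z ∈ S.H0 → R ≤ ‖z‖ → ‖S.Aperp z‖ ≤ m

/-- `M(A) = 0` -/
def MZero : Prop :=
  ∀ ε > (0 : ℝ), ∃ R : ℝ, ∀ z : X, S.emb z ∈ S.H0 → R ≤ ‖z‖ → ‖S.Aperp z‖ ≤ ε

/-- the estimate of condition (E∞), on the ball of radius `ρA` -/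
def Econd (C₁ R₁ κ ρA : ℝ) : Prop :=
  ∀ z₁ z₂ : X, S.emb z₁ ∈ S.H0 → S.emb z₂ ∈ S.H0 →
    R₁ ≤ ‖S.emb z₁‖ → R₁ ≤ ‖S.emb z₂‖ →
    ∀ x₁ x₂ : X, x₁ ∈ S.Xpm → x₂ ∈ S.Xpm → ‖x₁‖ < ρA → ‖x₂‖ < ρA →
      ‖S.Aperp (z₁ + x₁) - S.BinfX x₁ - S.Aperp (z₂ + x₂) + S.BinfX x₂‖ ≤
        1 / (κ * C₁) * ‖z₁ + x₁ - z₂ - x₂‖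

/-- the estimate of condition (E∞) with no ball restriction (the case `ρ_A = ∞`) -/
def EcondAll (C₁ R₁ κ : ℝ) : Prop :=
  ∀ z₁ z₂ : X, S.emb z₁ ∈ S.H0 → S.emb z₂ ∈ S.H0 →
    R₁ ≤ ‖S.emb z₁‖ → R₁ ≤ ‖S.emb z₂‖ →
    ∀ x₁ x₂ : X, x₁ ∈ S.Xpm → x₂ ∈ S.Xpm →
      ‖S.Aperp (z₁ + x₁) - S.BinfX x₁ - S.Aperp (z₂ + x₂) + S.BinfX x₂‖ ≤
        1 / (κ * C₁) * ‖z₁ + x₁ - z₂ - x₂‖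

/-- the estimate of condition (E'∞), on the ball of radius `ρA` -/
def Econd' (C₁ R₁ κ ρA : ℝ) : Prop :=
  ∀ z : X, S.emb z ∈ S.H0 → R₁ ≤ ‖S.emb z‖ →
    ∀ x₁ x₂ : X, x₁ ∈ S.Xpm → x₂ ∈ S.Xpm → ‖x₁‖ < ρA → ‖x₂‖ < ρA →
      ‖S.Aperp (z + x₁) - S.BinfX x₁ - S.Aperp (z + x₂) + S.BinfX x₂‖ ≤
        1 / (κ * C₁) * ‖x₁ - x₂‖

/-- the estimate of condition (E'∞) with no ball restriction (the case `ρ_A = ∞`) -/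
def Econd'All (C₁ R₁ κ : ℝ) : Prop :=
  ∀ z : X, S.emb z ∈ S.H0 → R₁ ≤ ‖S.emb z‖ →
    ∀ x₁ x₂ : X, x₁ ∈ S.Xpm → x₂ ∈ S.Xpm →
      ‖S.Aperp (z + x₁) - S.BinfX x₁ - S.Aperp (z + x₂) + S.BinfX x₂‖ ≤
        1 / (κ * C₁) * ‖x₁ - x₂‖

/-- the uniform smallness estimate of condition (SE∞), on the ball of radius `ρA` -/
def SEcond (ρA : ℝ) : Prop :=
  ∀ ε > (0 : ℝ), ∃ R : ℝ, ∀ z₁ z₂ : X, S.emb z₁ ∈ S.H0 → S.emb z₂ ∈ S.H0 →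
    R ≤ ‖S.emb z₁‖ → R ≤ ‖S.emb z₂‖ →
    ∀ x₁ x₂ : X, x₁ ∈ S.Xpm → x₂ ∈ S.Xpm → ‖x₁‖ < ρA → ‖x₂‖ < ρA →
      ‖S.Aperp (z₁ + x₁) - S.BinfX x₁ - S.Aperp (z₂ + x₂) + S.BinfX x₂‖ ≤
        ε * ‖z₁ + x₁ - z₂ - x₂‖

/-- the estimate of condition (SE∞) with no ball restriction (the case `ρ_A = ∞`) -/
def SEcondAll : Prop :=
  ∀ ε > (0 : ℝ), ∃ R : ℝ, ∀ z₁ z₂ : X, S.emb z₁ ∈ S.H0 → S.emb z₂ ∈ S.H0 →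
    R ≤ ‖S.emb z₁‖ → R ≤ ‖S.emb z₂‖ →
    ∀ x₁ x₂ : X, x₁ ∈ S.Xpm → x₂ ∈ S.Xpm →
      ‖S.Aperp (z₁ + x₁) - S.BinfX x₁ - S.Aperp (z₂ + x₂) + S.BinfX x₂‖ ≤
        ε * ‖z₁ + x₁ - z₂ - x₂‖

/-- condition (D∞) -/
def Dinf : Prop :=
  ∃ (P Q : X → H →L[ℝ] H) (Pi Qi : H →L[ℝ] H),
    (∀ x : X, S.emb x ∈ S.V → S.B x = P x + Q x) ∧
    S.Binf = Pi + Qi ∧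
    (∀ x : X, S.emb x ∈ S.V → ∀ u : H, u ≠ 0 → 0 < ⟪P x u, u⟫) ∧
    (∀ u : H, u ≠ 0 → 0 < ⟪Pi u, u⟫) ∧
    (∀ x : X, S.emb x ∈ S.V → IsCompactOperator (⇑(Q x))) ∧
    IsCompactOperator (⇑Qi) ∧
    (∀ μ : ℝ, μ < 0 → ∀ u : H, S.Binf u = μ • u → ∃ x : X, S.emb x = u) ∧
    (∀ xk : ℕ → X, (∀ k, S.emb (xk k) ∈ S.V) →
      Filter.Tendsto (fun k => ‖S.emb (xk k)‖) atTop atTop →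
      ∀ u : H, Filter.Tendsto (fun k => P (xk k) u) atTop (𝓝 (Pi u))) ∧
    (∀ ε > (0 : ℝ), ∃ R : ℝ, ∀ x : X, S.emb x ∈ S.V → R ≤ ‖S.emb x‖ → ‖Q x - Qi‖ ≤ ε) ∧
    (∀ xn : ℕ → X, (∀ n, S.emb (xn n) ∈ S.V) →
      Filter.Tendsto (fun n => ‖S.emb (xn n)‖) atTop atTop →
      ∃ C₀ > (0 : ℝ), ∃ n₀ : ℕ, ∀ n ≥ n₀, ∀ u : H, C₀ * ‖u‖ ^ 2 ≤ ⟪P (xn n) u, u⟫)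

/-- `L(u) = ½(B(∞)u, u)_H + o(‖u‖²)` as `‖u‖ → ∞` -/
def QuadAtInfty : Prop :=
  ∀ ε > (0 : ℝ), ∃ R : ℝ, ∀ u : H, R ≤ ‖u‖ →
    |S.L u - 2⁻¹ * ⟪S.Binf u, u⟫| ≤ ε * ‖u‖ ^ 2

end LuSetting


namespace LuSetting

variable {X H : Type*} [NormedAddCommGroup X] [NormedSpace ℝ X]
  [NormedAddCommGroup H] [InnerProductSpace ℝ H] [CompleteSpace H]

lemma inner_H0_Hpm (S : LuSetting X H) {u v : H} (hu : u ∈ S.H0) (hv : v ∈ S.Hpm) :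
    ⟪u, v⟫ = 0 := by
  obtain ⟨p, hp, q, hq, rfl⟩ := Submodule.mem_sup.1 hv
  rw [inner_add_right, S.orth_0p u hu p hp, S.orth_0m u hu q hq, add_zero]

lemma norm_emb_le_norm_emb_add (S : LuSetting X H) {z x : X} (hz : S.emb z ∈ S.H0)
    (hx : x ∈ S.Xpm) : ‖S.emb z‖ ≤ ‖S.emb (z + x)‖ := by
  have h0 : ⟪S.emb z, S.emb x⟫ = 0 := S.inner_H0_Hpm hz hx
  have h1 := norm_add_sq_real (S.emb z) (S.emb x)
  rw [h0] at h1
  rw [map_add]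
  refine le_of_sq_le_sq ?_ (norm_nonneg _)
  nlinarith [sq_nonneg ‖S.emb x‖]

lemma continuousAt_Aperp (S : LuSetting X H) {x : X} (hx : S.emb x ∈ S.V) :
    ContinuousAt S.Aperp x := by
  have hA : ContinuousAt S.A x :=
    S.A_cont.continuousAt ((S.V_open.preimage S.emb.continuous).mem_nhds hx)
  exact hA.sub (S.P0X.continuous.continuousAt.comp hA)

/-- The estimate of (SE∞) extends from the open to the closed ball of radius `ρA`. -/
lemma SEcond.closedBall {S : LuSetting X H} {R₁ ρA : ℝ} (hρA : 0 < ρA)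
    (hR₁V : ∀ u : H, R₁ ≤ ‖u‖ → u ∈ S.V) (hSE : S.SEcond ρA) {ε : ℝ} (hε : 0 < ε) :
    ∃ R : ℝ, ∀ z₁ z₂ : X, S.emb z₁ ∈ S.H0 → S.emb z₂ ∈ S.H0 →
      R ≤ ‖S.emb z₁‖ → R ≤ ‖S.emb z₂‖ →
      ∀ x₁ x₂ : X, x₁ ∈ S.Xpm → x₂ ∈ S.Xpm → ‖x₁‖ ≤ ρA → ‖x₂‖ ≤ ρA →
        ‖S.Aperp (z₁ + x₁) - S.BinfX x₁ - S.Aperp (z₂ + x₂) + S.BinfX x₂‖ ≤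
          ε * ‖z₁ + x₁ - z₂ - x₂‖ := by
  obtain ⟨R, hR⟩ := hSE ε hε
  refine ⟨max R R₁, fun z₁ z₂ hz₁ hz₂ hn₁ hn₂ x₁ x₂ hx₁ hx₂ hr₁ hr₂ => ?_⟩
  have hcont : ∀ z x : X, S.emb z ∈ S.H0 → max R R₁ ≤ ‖S.emb z‖ → x ∈ S.Xpm →
      Tendsto (fun t : ℝ => S.Aperp (z + t • x)) (𝓝[<] 1) (𝓝 (S.Aperp (z + x))) := by
    intro z x hz hn hx
    have hA := S.continuousAt_Aperp (hR₁V _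
      (((le_max_right _ _).trans hn).trans (S.norm_emb_le_norm_emb_add hz hx)))
    have hl : Tendsto (fun t : ℝ => z + t • x) (𝓝 1) (𝓝 (z + x)) := by
      have hc : Continuous fun t : ℝ => z + t • x := by fun_prop
      simpa using hc.tendsto 1
    exact hA.tendsto.comp (hl.mono_left nhdsWithin_le_nhds)
  have hs : ∀ x : X, Tendsto (fun t : ℝ => t • x) (𝓝[<] 1) (𝓝 x) := by
    intro x
    have hc : Continuous fun t : ℝ => t • x := by fun_prop
    simpa using (hc.tendsto 1).mono_left nhdsWithin_le_nhds
  have hB : ∀ x : X, Tendsto (fun t : ℝ => S.BinfX (t • x)) (𝓝[<] 1) (𝓝 (S.BinfX x)) :=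
    fun x => (S.BinfX.continuous.tendsto x).comp (hs x)
  have hl := ((((hcont z₁ x₁ hz₁ hn₁ hx₁).sub (hB x₁)).sub
    (hcont z₂ x₂ hz₂ hn₂ hx₂)).add (hB x₂)).norm
  have hr := ((((hs x₁).const_add z₁).sub_const z₂).sub (hs x₂)).norm.const_mul ε
  refine le_of_tendsto_of_tendsto hl hr ?_
  have hball : ∀ t ∈ Ioo (0 : ℝ) 1, ∀ x : X, ‖x‖ ≤ ρA → ‖t • x‖ < ρA := by
    intro t ht x hx
    rw [norm_smul, Real.norm_of_nonneg ht.1.le]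
    nlinarith [ht.1, ht.2, norm_nonneg x]
  filter_upwards [Ioo_mem_nhdsLT (zero_lt_one' ℝ)] with t ht
  exact hR z₁ z₂ hz₁ hz₂ ((le_max_left _ _).trans hn₁) ((le_max_left _ _).trans hn₂) _ _
    (S.Xpm.smul_mem t hx₁) (S.Xpm.smul_mem t hx₂) (hball t ht _ hr₁) (hball t ht _ hr₂)

end LuSetting

/-- Lemma 2.2(ii): under (S), (F1∞)–(F3∞), (C1∞)–(C2∞) and (SE∞),
the unique map `h∞` with `(I−P⁰∞)A(z + h∞(z)) = θ` is strictly Fréchet differentiable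
at infinity with strict Fréchet derivative zero: for every `ε > 0` there is `R ≥ R₁`
with `‖h∞(z₂) − h∞(z₁)‖_X ≤ ε‖z₂ − z₁‖_X` whenever `‖z₁‖, ‖z₂‖ ≥ R`. -/
theorem statement9 {X H : Type*} [NormedAddCommGroup X] [NormedSpace ℝ X]
    [NormedAddCommGroup H] [InnerProductSpace ℝ H] [CompleteSpace H]
    (S : LuSetting X H)
    (C₁ R₁ ρA : ℝ) (hC₁ : S.InvBound C₁) (hρA : 0 < ρA) (hR₁ : 0 < R₁)
    (hR₁V : ∀ u : H, R₁ ≤ ‖u‖ → u ∈ S.V)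
    (hρ : (∃ m, S.MBound m ∧ C₁ * m < ρA) ∨ S.SEcondAll)
    (hSE : S.SEcond ρA)
    -- the map h∞ with its defining properties
    (h : X → X)
    (hmem : ∀ z ∈ S.zdomCl R₁, h z ∈ S.Xpm)
    (hball : (∃ m, S.MBound m) → ∀ z ∈ S.zdomCl R₁, ‖h z‖ ≤ ρA)
    (heq : ∀ z ∈ S.zdomCl R₁, S.Aperp (z + h z) = 0) :
    ∀ ε > (0 : ℝ), ∃ R ≥ R₁, ∀ z₁ ∈ S.zdomCl R, ∀ z₂ ∈ S.zdomCl R,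
      ‖h z₂ - h z₁‖ ≤ ε * ‖z₂ - z₁‖ := by
  intro ε hε
  obtain ⟨hC, -, -, hinv⟩ := hC₁
  -- `η` satisfies both `C₁ η ≤ 1/2`, for absorption, and `2 C₁ η ≤ ε`.
  set η : ℝ := min 1 ε / (2 * C₁) with hη
  have hηpos : 0 < η := div_pos (lt_min one_pos hε) (by positivity)
  have hCη : 2 * (C₁ * η) = min 1 ε := by rw [hη]; field_simp
  have key : ∃ R : ℝ, ∀ z₁ ∈ S.zdomCl (max R R₁), ∀ z₂ ∈ S.zdomCl (max R R₁),
      ‖S.Aperp (z₁ + h z₁) - S.BinfX (h z₁) - S.Aperp (z₂ + h z₂) + S.BinfX (h z₂)‖ ≤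
        η * ‖z₁ + h z₁ - z₂ - h z₂‖ := by
    have hsub : ∀ R, ∀ z ∈ S.zdomCl (max R R₁), z ∈ S.zdomCl R₁ :=
      fun R z hz => ⟨hz.1, (le_max_right _ _).trans hz.2⟩
    rcases hρ with ⟨m, hm, -⟩ | hall
    · obtain ⟨R, hR⟩ := hSE.closedBall hρA hR₁V hηpos
      refine ⟨R, fun z₁ hz₁ z₂ hz₂ => ?_⟩
      exact hR z₁ z₂ hz₁.1 hz₂.1 ((le_max_left _ _).trans hz₁.2)
        ((le_max_left _ _).trans hz₂.2) _ _ (hmem _ (hsub R _ hz₁)) (hmem _ (hsub R _ hz₂))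
        (hball ⟨m, hm⟩ _ (hsub R _ hz₁)) (hball ⟨m, hm⟩ _ (hsub R _ hz₂))
    · obtain ⟨R, hR⟩ := hall η hηpos
      refine ⟨R, fun z₁ hz₁ z₂ hz₂ => ?_⟩
      exact hR z₁ z₂ hz₁.1 hz₂.1 ((le_max_left _ _).trans hz₁.2)
        ((le_max_left _ _).trans hz₂.2) _ _ (hmem _ (hsub R _ hz₁)) (hmem _ (hsub R _ hz₂))
  obtain ⟨R, hR⟩ := key
  refine ⟨max R R₁, le_max_right _ _, fun z₁ hz₁ z₂ hz₂ => ?_⟩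
  have hz₁' : z₁ ∈ S.zdomCl R₁ := ⟨hz₁.1, (le_max_right _ _).trans hz₁.2⟩
  have hz₂' : z₂ ∈ S.zdomCl R₁ := ⟨hz₂.1, (le_max_right _ _).trans hz₂.2⟩
  have h1 := hR z₁ hz₁ z₂ hz₂
  rw [heq z₁ hz₁', heq z₂ hz₂',
    show (0 : X) - S.BinfX (h z₁) - 0 + S.BinfX (h z₂) = S.BinfX (h z₂ - h z₁) by
      rw [map_sub]; abel] at h1
  have h2 : ‖z₁ + h z₁ - z₂ - h z₂‖ ≤ ‖z₂ - z₁‖ + ‖h z₂ - h z₁‖ := by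
    rw [show z₁ + h z₁ - z₂ - h z₂ = -((z₂ - z₁) + (h z₂ - h z₁)) by abel, norm_neg]
    exact norm_add_le _ _
  have h3 : ‖h z₂ - h z₁‖ ≤ C₁ * η * (‖z₂ - z₁‖ + ‖h z₂ - h z₁‖) := by
    calc ‖h z₂ - h z₁‖ ≤ C₁ * ‖S.BinfX (h z₂ - h z₁)‖ :=
          hinv _ (S.Xpm.sub_mem (hmem _ hz₂') (hmem _ hz₁'))
      _ ≤ C₁ * (η * (‖z₂ - z₁‖ + ‖h z₂ - h z₁‖)) := by
          have := h1.trans (mul_le_mul_of_nonneg_left h2 hηpos.le)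
          exact mul_le_mul_of_nonneg_left this hC.le
      _ = _ := by ring
  have h4 : 2 * (C₁ * η) ≤ 1 := hCη ▸ min_le_left _ _
  have h5 : 2 * (C₁ * η) ≤ ε := hCη ▸ min_le_right _ _
  nlinarith [mul_le_mul_of_nonneg_right h4 (norm_nonneg (h z₂ - h z₁)),
    mul_le_mul_of_nonneg_right h5 (norm_nonneg (z₂ - z₁))]
end
end

section
/- Assume (S), (F1∞)–(F3∞), (C1∞)–(C2∞), (D∞) and ν∞ > 0, let R₁ > 0 satisfy {x ∈ H : ‖x‖ ≥ R₁} ⊂ V∞, and let h∞ : {z ∈ H⁰∞ : ‖z‖ ≥ R₁} → X^±∞ be a continuous map with (I−P⁰∞)A(z + h∞(z)) = θ for all z ∈ H⁰∞ with ‖z‖ ≥ R₁. Define F∞(z,u) := L(z + h∞(z) + u) − L(z + h∞(z)) for z ∈ H⁰∞ with ‖z‖ ≥ R₁ and u ∈ H^±∞. If {z_k} ⊂ H⁰∞ with ‖z_k‖ ≥ R₁ and ‖z_k‖ → ∞, and {u_k} ⊂ H^±∞ with ‖u_k − u₀‖ → 0 for some u₀ ∈ H, then F∞(z_k, u_k)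 → ½(B(∞)u₀, u₀)_H as k → ∞. -/
/-!
Write `w = z + h z`. Since `(I - P⁰∞) A(w) = 0`, the gradient `A(w)` lies in `H⁰∞` and is
orthogonal to `H^±∞`. Hence for `v ∈ X^±∞` the first-order term of the Taylor expansion of
`t ↦ L (w + t v)` on `[0, 1]` vanishes, and the Lagrange remainder gives a point `x = w + s v`
with `L (w + v) - L w = ½ (B(x) v, v)` (`exists_taylor_point`). As `x - z ∈ H^±∞` is orthogonal to
`z`, `‖x‖ ≥ ‖z‖`, so these points go to infinity with `z`.

By `(D∞)`, `(B(x_k) v_k, v_k) → (B(∞) u₀, u₀)` whenever `x_k → ∞` and `v_k → u₀` in norm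
(`tendsto_quadratic_form`): the operators `P(x_k)` converge strongly, hence are uniformly bounded
by Banach–Steinhaus, and `Q(x_k) → Q(∞)` in norm. Finally, `X^±∞` is dense in `H^±∞`
(`exists_mem_Xpm`) and `L` is continuous, so each `u_k ∈ H^±∞` may be replaced by some
`v_k ∈ X^±∞` with an error tending to `0` both in norm and in the value of `L`.
-/

open Filter Topology Set RealInnerProductSpace

noncomputable section

/-! ### Taylor's formula and strong operator convergence -/

/-- Taylor's formula of order two with Lagrange remainder on `[0, 1]` when the first-order term
vanishes; the second derivative is only required to exist pointwise. -/
lemma taylor_lagrange_two {g g' g'' : ℝ → ℝ} (h1 : ∀ t, HasDerivAt g (g' t) t)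
    (h2 : ∀ t, HasDerivAt g' (g'' t) t) (h0 : g' 0 = 0) :
    ∃ s : ℝ, g 1 - g 0 = 2⁻¹ * g'' s := by
  -- Cauchy's mean value theorem for `g` against `t ^ 2`, then the mean value theorem for `g'`
  obtain ⟨a, ha, hae⟩ := exists_ratio_hasDerivAt_eq_ratio_slope g g' (zero_lt_one (α := ℝ))
    (fun t _ => (h1 t).continuousAt.continuousWithinAt) (fun t _ => h1 t)
    (fun t => t ^ 2) (fun t => 2 * t) (by fun_prop)
    (fun t _ => by simpa using hasDerivAt_pow 2 t)
  obtain ⟨b, -, hbe⟩ := exists_hasDerivAt_eq_slope g' g'' ha.1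
    (fun t _ => (h2 t).continuousAt.continuousWithinAt) (fun t _ => h2 t)
  refine ⟨b, ?_⟩
  have ha0 : a ≠ 0 := ha.1.ne'
  rw [hbe, h0]
  field_simp
  linarith

/-- Strong convergence of operators on a Banach space, evaluated along a convergent sequence of
vectors. -/
lemma tendsto_clm_apply_of_strong {H : Type*} [NormedAddCommGroup H] [InnerProductSpace ℝ H]
    [CompleteSpace H] {T : ℕ → H →L[ℝ] H} {T' : H →L[ℝ] H}
    (hT : ∀ u, Tendsto (fun k => T k u) atTop (𝓝 (T' u)))
    {v : ℕ → H} {u : H} (hv : Tendsto v atTop (𝓝 u)) :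
    Tendsto (fun k => T k (v k)) atTop (𝓝 (T' u)) := by
  obtain ⟨C, hC⟩ := banach_steinhaus (g := T) (fun x => by
    obtain ⟨C, hC⟩ := (hT x).norm.bddAbove_range
    exact ⟨C, fun i => hC ⟨i, rfl⟩⟩)
  have h1 : Tendsto (fun k => T k (v k - u)) atTop (𝓝 0) := by
    have h2 : Tendsto (fun k => C * ‖v k - u‖) atTop (𝓝 0) := by
      simpa using (tendsto_iff_norm_sub_tendsto_zero.1 hv).const_mul C
    exact squeeze_zero_norm (fun k => (T k).le_of_opNorm_le (hC k) _) h2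
  simpa using h1.add (hT u)

namespace LuSetting

variable {X H : Type*} [NormedAddCommGroup X] [NormedSpace ℝ X]
  [NormedAddCommGroup H] [InnerProductSpace ℝ H] [CompleteSpace H]
variable (S : LuSetting X H)

/-! ### The decomposition `H = H⁰∞ ⊕ H^±∞` -/

lemma inner_H0_Hpm_s13 {z v : H} (hz : z ∈ S.H0) (hv : v ∈ S.Hpm) : ⟪z, v⟫ = 0 := by
  obtain ⟨p, hp, m, hm, rfl⟩ := Submodule.mem_sup.1 hv
  rw [inner_add_right, S.orth_0p z hz p hp, S.orth_0m z hz m hm, add_zero]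

lemma norm_le_norm_add {z v : H} (hz : z ∈ S.H0) (hv : v ∈ S.Hpm) : ‖z‖ ≤ ‖z + v‖ := by
  have h1 := norm_add_sq_eq_norm_sq_add_norm_sq_of_inner_eq_zero z v (S.inner_H0_Hpm_s13 hz hv)
  nlinarith [norm_nonneg z, norm_nonneg v, norm_nonneg (z + v), mul_self_nonneg ‖v‖]

/-- `P⁰∞` takes its values in `H⁰∞` and `I - P⁰∞` in `H^±∞`. -/
lemma P0_mem_and (u : H) : S.P0 u ∈ S.H0 ∧ u - S.P0 u ∈ S.Hpm := by
  have hu : u ∈ S.H0 ⊔ S.Hp ⊔ S.Hm := by rw [S.span_all]; trivial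
  obtain ⟨y, hy, m, hm, rfl⟩ := Submodule.mem_sup.1 hu
  obtain ⟨z, hz, p, hp, rfl⟩ := Submodule.mem_sup.1 hy
  have h1 : S.P0 (z + p + m) = z := by
    rw [map_add, map_add, S.P0_H0 z hz, S.P0_Hp p hp, S.P0_Hm m hm, add_zero, add_zero]
  rw [h1]
  refine ⟨hz, ?_⟩
  have h2 : z + p + m - z = p + m := by abel
  rw [h2]
  exact Submodule.add_mem_sup hp hm

lemma P0_Hpm {u : H} (hu : u ∈ S.Hpm) : S.P0 u = 0 := by
  obtain ⟨p, hp, m, hm, rfl⟩ := Submodule.mem_sup.1 hu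
  rw [map_add, S.P0_Hp p hp, S.P0_Hm m hm, add_zero]

/-- `X^±∞` is dense in `H^±∞`: the continuous projection `I - P⁰∞` maps `X` into `X^±∞`. -/
lemma exists_mem_Xpm {u : H} (hu : u ∈ S.Hpm) {N : Set H} (hN : N ∈ 𝓝 u) :
    ∃ v ∈ S.Xpm, S.emb v ∈ N := by
  have hc : Tendsto (fun y : H => y - S.P0 y) (𝓝 u) (𝓝 u) := by
    have h1 : Continuous (fun y : H => y - S.P0 y) := by fun_prop
    simpa [S.P0_Hpm hu] using h1.tendsto u
  obtain ⟨y, hy, ⟨x, rfl⟩⟩ := mem_closure_iff_nhds.1 (S.emb_dense u) _ (hc hN)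
  have he : S.emb (x - S.P0X x) = S.emb x - S.P0 (S.emb x) := by
    rw [map_sub, S.P0X_emb]
  refine ⟨x - S.P0X x, ?_, ?_⟩
  · change S.emb (x - S.P0X x) ∈ S.Hpm
    rw [he]
    exact (S.P0_mem_and _).2
  · rw [he]
    exact hy

/-! ### Second-order expansion of `L` along `X^±∞` -/

lemma hasDerivAt_L (w v : X) (t : ℝ) (hV : S.emb (w + t • v) ∈ S.V) :
    HasDerivAt (fun t : ℝ => S.L (S.emb (w + t • v)))
      ⟪S.emb (S.A (w + t • v)), S.emb v⟫ t := by
  rw [hasDerivAt_iff_tendsto_slope_zero, ← S.A_repr _ hV]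
  refine (S.DL_deriv _ hV (S.emb v)).congr fun s => ?_
  have h1 : S.emb (w + (t + s) • v) = S.emb (w + t • v) + s • S.emb v := by
    simp only [map_add, map_smul, add_smul, add_assoc]
  rw [h1, smul_eq_mul, div_eq_inv_mul]

lemma hasDerivAt_A (w v : X) (t : ℝ) (hV : S.emb (w + t • v) ∈ S.V) :
    HasDerivAt (fun t : ℝ => ⟪S.emb (S.A (w + t • v)), S.emb v⟫)
      ⟪S.B (w + t • v) (S.emb v), S.emb v⟫ t := by
  have h1 : HasDerivAt (fun t : ℝ => S.A (w + t • v)) (S.DA (w + t • v) v) t := by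
    rw [hasDerivAt_iff_tendsto_slope_zero]
    refine (S.DA_deriv _ hV v).congr fun s => ?_
    rw [add_smul, add_assoc]
  rw [← S.B_repr _ hV]
  have h2 := S.emb.hasFDerivAt.comp_hasDerivAt t h1
  simpa using h2.inner ℝ (hasDerivAt_const t (S.emb v))

/-- The first-order term at a solution `z + y` of `(I - P⁰∞) A = 0` vanishes along `X^±∞`, so the
increment of `L` is half the Hessian form at a point of the segment, which is at least as far from
the origin as `z`. -/
lemma exists_taylor_point {R₁ : ℝ} (hV : ∀ u : H, R₁ ≤ ‖u‖ → u ∈ S.V) {z y v : X}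
    (hz : z ∈ S.zdomCl R₁) (hy : y ∈ S.Xpm) (hA : S.Aperp (z + y) = 0) (hv : v ∈ S.Xpm) :
    ∃ x : X, S.emb x ∈ S.V ∧ ‖S.emb z‖ ≤ ‖S.emb x‖ ∧
      S.L (S.emb z + S.emb y + S.emb v) - S.L (S.emb z + S.emb y) =
        2⁻¹ * ⟪S.B x (S.emb v), S.emb v⟫ := by
  have hn : ∀ t : ℝ, ‖S.emb z‖ ≤ ‖S.emb (z + y + t • v)‖ := fun t => by
    have hmem : S.emb y + t • S.emb v ∈ S.Hpm := S.Hpm.add_mem hy (S.Hpm.smul_mem t hv)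
    simpa only [map_add, map_smul, add_assoc] using S.norm_le_norm_add hz.1 hmem
  have hxV : ∀ t : ℝ, S.emb (z + y + t • v) ∈ S.V := fun t => hV _ (hz.2.trans (hn t))
  have h0 : ⟪S.emb (S.A (z + y + (0 : ℝ) • v)), S.emb v⟫ = 0 := by
    have h1 : S.A (z + y) = S.P0X (S.A (z + y)) := sub_eq_zero.1 hA
    rw [zero_smul, add_zero, h1, S.P0X_emb]
    exact S.inner_H0_Hpm_s13 (S.P0_mem_and _).1 hv
  obtain ⟨s, hs⟩ := taylor_lagrange_two (fun t => S.hasDerivAt_L (z + y) v t (hxV t))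
    (fun t => S.hasDerivAt_A (z + y) v t (hxV t)) h0
  refine ⟨z + y + s • v, hxV s, hn s, ?_⟩
  simpa using hs

/-! ### Convergence of the Hessian forms and of `F∞` -/

/-- Under `(D∞)`, the Hessian forms converge to the form of `B(∞)` along norm-convergent
arguments. -/
lemma tendsto_quadratic_form (hD : S.Dinf) {x : ℕ → X} (hV : ∀ k, S.emb (x k) ∈ S.V)
    (hx : Tendsto (fun k => ‖S.emb (x k)‖) atTop atTop) {v : ℕ → H} {u : H}
    (hv : Tendsto v atTop (𝓝 u)) :
    Tendsto (fun k => ⟪S.B (x k) (v k), v k⟫) atTop (𝓝 ⟪S.Binf u, u⟫) := by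
  obtain ⟨P, Q, Pi, Qi, hB, hBi, -, -, -, -, -, hP, hQ, -⟩ := hD
  have hQ1 : Tendsto (fun k => Q (x k)) atTop (𝓝 Qi) := by
    refine Metric.tendsto_nhds.2 fun ε hε => ?_
    obtain ⟨R, hR⟩ := hQ (ε / 2) (half_pos hε)
    filter_upwards [hx.eventually_ge_atTop R] with k hk
    rw [dist_eq_norm]
    exact (hR _ (hV k) hk).trans_lt (half_lt_self hε)
  have h1 := (tendsto_clm_apply_of_strong (hP x hV hx) hv).add 
    ((isBoundedBilinearMap_apply (𝕜 := ℝ)).continuous.tendsto (Qi, u) |>.comp (hQ1.prodMk_nhds hv))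
  rw [hBi]
  refine (h1.inner hv).congr fun k => ?_
  rw [hB _ (hV k), add_apply]
  rfl

end LuSetting

/-- Lemma 2.7(i): under (S), (F1∞)–(F3∞), (C1∞)–(C2∞), (D∞) and
`ν∞ > 0`, given `h∞` with `(I−P⁰∞)A(z + h∞(z)) = θ`, if `{z_k} ⊆ H⁰∞` with
`‖z_k‖ ≥ R₁`, `‖z_k‖ → ∞`, and `{u_k} ⊆ H^±∞` with `u_k → u₀`, then
`F∞(z_k, u_k) → ½(B(∞)u₀, u₀)_H`. -/
theorem statement13 {X H : Type*} [NormedAddCommGroup X] [NormedSpace ℝ X]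
    [NormedAddCommGroup H] [InnerProductSpace ℝ H] [CompleteSpace H]
    (S : LuSetting X H) (hD : S.Dinf) (hν : S.H0 ≠ ⊥)
    (R₁ : ℝ) (hR₁ : 0 < R₁) (hR₁V : ∀ u : H, R₁ ≤ ‖u‖ → u ∈ S.V)
    (h : X → X)
    (hmem : ∀ z ∈ S.zdomCl R₁, h z ∈ S.Xpm)
    (hcont : ContinuousOn h (S.zdomCl R₁))
    (heq : ∀ z ∈ S.zdomCl R₁, S.Aperp (z + h z) = 0)
    (zk : ℕ → X) (hzk : ∀ k, zk k ∈ S.zdomCl R₁)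
    (hzk_infty : Filter.Tendsto (fun k => ‖S.emb (zk k)‖) atTop atTop)
    (uk : ℕ → H) (huk : ∀ k, uk k ∈ S.Hpm)
    (u₀ : H) (huk_lim : Filter.Tendsto uk atTop (𝓝 u₀)) :
    Filter.Tendsto
      (fun k => S.L (S.emb (zk k) + S.emb (h (zk k)) + uk k) -
        S.L (S.emb (zk k) + S.emb (h (zk k))))
      atTop (𝓝 (2⁻¹ * ⟪S.Binf u₀, u₀⟫)) := by
  -- `v k ∈ X^±∞` close to `u k`, both in norm and in the value of `L`
  have hex : ∀ k : ℕ, ∃ v ∈ S.Xpm, dist (S.emb v) (uk k) < 1 / ((k : ℝ) + 1) ∧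
      dist (S.L (S.emb (zk k) + S.emb (h (zk k)) + S.emb v))
        (S.L (S.emb (zk k) + S.emb (h (zk k)) + uk k)) < 1 / ((k : ℝ) + 1) := fun k => by
    have hpos : (0 : ℝ) < 1 / ((k : ℝ) + 1) := Nat.one_div_pos_of_nat
    have hVk : S.emb (zk k) + S.emb (h (zk k)) + uk k ∈ S.V := by
      refine hR₁V _ ((hzk k).2.trans ?_)
      rw [add_assoc]
      exact S.norm_le_norm_add (hzk k).1 (S.Hpm.add_mem (hmem _ (hzk k)) (huk k))
    have hc : ContinuousAt (fun v : H => S.L (S.emb (zk k) + S.emb (h (zk k)) + v)) (uk k) :=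
      ContinuousAt.comp (f := fun v : H => S.emb (zk k) + S.emb (h (zk k)) + v)
        (S.L_cont.continuousAt (S.V_open.mem_nhds hVk)) (by fun_prop)
    obtain ⟨v, hv, hvN⟩ := S.exists_mem_Xpm (huk k)
      (inter_mem (Metric.ball_mem_nhds _ hpos) (hc (Metric.ball_mem_nhds _ hpos)))
    exact ⟨v, hv, hvN.1, hvN.2⟩
  choose v hv hvu hvL using hex
  choose x hxV hxz hxL using fun k =>
    S.exists_taylor_point hR₁V (hzk k) (hmem _ (hzk k)) (heq _ (hzk k)) (hv k)
  have hsmall : Tendsto (fun k : ℕ => 1 / ((k : ℝ) + 1)) atTop (𝓝 0) :=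
    tendsto_one_div_add_atTop_nhds_zero_nat
  have hvlim : Tendsto (fun k => S.emb (v k)) atTop (𝓝 u₀) := by
    have hd : Tendsto (fun k => dist (uk k) (S.emb (v k))) atTop (𝓝 0) :=
      squeeze_zero (fun k => dist_nonneg)
        (fun k => by rw [dist_comm]; exact (hvu k).le) hsmall
    exact huk_lim.congr_dist hd
  have hmain := (S.tendsto_quadratic_form hD hxV (tendsto_atTop_mono hxz hzk_infty) hvlim).const_mul
    (2⁻¹ : ℝ)
  refine hmain.congr_dist (squeeze_zero (fun k => dist_nonneg) (fun k => ?_) hsmall)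
  rw [← hxL k, dist_sub_right]
  exact (hvL k).le
end
end

section
/- Assume (S), (F1∞)–(F3∞), (C1∞)–(C2∞) and ν∞ > 0, let R₁ > 0 satisfy {x ∈ H : ‖x‖ ≥ R₁} ⊂ V∞, let h∞ : {z ∈ H⁰∞ : ‖z‖ ≥ R₁} → X^±∞ be a map with (I−P⁰∞)A(z + h∞(z)) = θ for all z ∈ H⁰∞ with ‖z‖ ≥ R₁, and define F∞(z, u⁺ + u⁻) := L(z + h∞(z) + u⁺ + u⁻) − L(z + h∞(z)). Suppose in addition that |L(z + u) − ½(B(∞)u, u)_H| ≤ (a∞/8)‖z + u‖² for all z ∈ H⁰∞ with ‖z‖ ≥ R₁ and all u ∈ H^±∞ (this can be arranged by increasing R₁ when L(u) = ½(B(∞)u,u)_H + o(‖u‖²) as ‖u‖ → ∞). Then for all z ∈ H⁰∞ with ‖z‖ ≥ R₁, u⁺ ∈ H⁺∞ and u⁻ ∈ H⁻∞: (a∞/4)‖u⁺‖² − 2‖B(∞)‖·‖u⁻‖² − (2‖B(∞)‖²/a∞)‖h∞(z)‖² − (a∞/2)‖z‖² ≤ F∞(z, u⁺ + u⁻) ≤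 2‖B(∞)‖·‖u⁺‖² − (a∞/4)‖u⁻‖² + (a∞/2)‖z‖² + (2‖B(∞)‖²/a∞)‖h∞(z)‖². -/
/-!
Write `h∞(z) = p + m` and `u = u⁺ + u⁻` along `H⁺∞ ⊕ H⁻∞`. Replacing `L` by the quadratic form
`½(B(∞)·,·)` at `z + h∞(z) + u` and at `z + h∞(z)` costs at most
`(a∞/8)(‖z + h∞(z) + u‖² + ‖z + h∞(z)‖²)`. The form splits orthogonally over `H⁺∞ ⊕ H⁻∞`, and on
each summand its increment is `(B(∞)p, u⁺) + ½(B(∞)u⁺, u⁺)`, respectively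
`(B(∞)m, u⁻) + ½(B(∞)u⁻, u⁻)`. The definite parts are bounded by the gap `a∞` on one side and by
`‖B(∞)‖` on the other, the mixed terms by Cauchy–Schwarz.

What is left are inequalities between quadratic forms in the four norms (`scalar_bound`). They rely
on `2a∞ ≤ ‖B(∞)‖`, which holds unless `H⁺∞` and `H⁻∞` are both zero; in that degenerate case
`F∞ = 0` and the bounds are trivial.
-/

open Filter Topology Set RealInnerProductSpace

noncomputable section

/-- The estimate between norms behind both bounds: `P`, `p` are the norms of the components of `u`
and `h∞(z)` in the summand where the form is coercive with the wanted sign, `M`, `m` those in the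
other summand. -/
lemma scalar_bound {a b P M p m : ℝ} (ha : 0 < a) (hab : 2 * a ≤ b) :
    a / 4 * P ^ 2 - 2 * b * M ^ 2 - 2 * b ^ 2 / a * (p ^ 2 + m ^ 2) ≤
      a * P ^ 2 - b * (p * P) - b * (m * M) - b / 2 * M ^ 2
        - a / 4 * (P ^ 2 + p ^ 2 + M ^ 2 + m ^ 2) - a / 8 * (p ^ 2 + m ^ 2) := by
  obtain ⟨c, rfl⟩ : ∃ c, b = a * c := ⟨b / a, by field_simp⟩
  have hc : 2 ≤ c := by nlinarith
  have e : 2 * (a * c) ^ 2 / a = a * (2 * c ^ 2) := by field_simp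
  -- After dividing by `a`, the forms in `(P, p)` and in `(M, m)` are sums of squares.
  have h1 : 0 ≤ P ^ 2 / 2 - c * (p * P) + (2 * c ^ 2 - 3 / 8) * p ^ 2 := by
    nlinarith [sq_nonneg (P - c * p), mul_nonneg (show 0 ≤ c ^ 2 - 1 by nlinarith) (sq_nonneg p)]
  have h2 : 0 ≤ (3 * c / 2 - 1 / 4) * M ^ 2 - c * (m * M) + (2 * c ^ 2 - 3 / 8) * m ^ 2 := by
    nlinarith [sq_nonneg (M - c * m), mul_nonneg (show 0 ≤ c ^ 2 - 1 by nlinarith) (sq_nonneg m),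
      mul_nonneg (show 0 ≤ c - 2 by linarith) (sq_nonneg M)]
  rw [e]
  nlinarith [mul_nonneg ha.le h1, mul_nonneg ha.le h2]

lemma norm_add_sq_le_two_mul {H : Type*} [NormedAddCommGroup H]
    [InnerProductSpace ℝ H] (u v : H) : ‖u + v‖ ^ 2 ≤ 2 * (‖u‖ ^ 2 + ‖v‖ ^ 2) := by
  nlinarith [parallelogram_law_with_norm ℝ u v, sq_nonneg ‖u - v‖]

namespace LuSetting

variable {X H : Type*} [NormedAddCommGroup X] [NormedSpace ℝ X]
  [NormedAddCommGroup H] [InnerProductSpace ℝ H] [CompleteSpace H]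
variable (S : LuSetting X H)

lemma abs_inner_Binf_le (u v : H) : |⟪S.Binf u, v⟫| ≤ ‖S.Binf‖ * (‖u‖ * ‖v‖) :=
  calc |⟪S.Binf u, v⟫| ≤ ‖S.Binf u‖ * ‖v‖ := abs_real_inner_le_norm _ _
    _ ≤ (‖S.Binf‖ * ‖u‖) * ‖v‖ := by gcongr; exact S.Binf.le_opNorm u
    _ = _ := by ring

lemma inner_Binf_add_self (u v : H) :
    ⟪S.Binf (u + v), u + v⟫ = ⟪S.Binf u, u⟫ + 2 * ⟪S.Binf u, v⟫ + ⟪S.Binf v, v⟫ := by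
  have : ⟪S.Binf v, u⟫ = ⟪S.Binf u, v⟫ := by rw [S.Binf_symm, real_inner_comm]
  simp only [map_add, inner_add_left, inner_add_right, this]
  ring

lemma inner_Binf_split {x y : H} (hx : x ∈ S.Hp) (hy : y ∈ S.Hm) :
    ⟪S.Binf (x + y), x + y⟫ = ⟪S.Binf x, x⟫ + ⟪S.Binf y, y⟫ := by
  rw [inner_Binf_add_self, S.orth_pm _ (S.Binf_Hp x hx) y hy]
  ring

lemma norm_sq_split {z x y : H} (hz : z ∈ S.H0) (hx : x ∈ S.Hp) (hy : y ∈ S.Hm) :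
    ‖z + (x + y)‖ ^ 2 = ‖z‖ ^ 2 + ‖x‖ ^ 2 + ‖y‖ ^ 2 := by
  rw [norm_add_sq_real, norm_add_sq_real, inner_add_right, S.orth_0p z hz x hx,
    S.orth_0m z hz y hy, S.orth_pm x hx y hy]
  ring

/-- If the norm of `B(∞)` is below its definiteness gap, the definite subspaces vanish. -/
lemma eq_zero_of_norm_lt (hb : ‖S.Binf‖ < 2 * S.ainf) {v : H}
    (hv : v ∈ S.Hp ∨ v ∈ S.Hm) : v = 0 := by
  have h1 := abs_le.1 (S.abs_inner_Binf_le v v)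
  have h2 : (2 * S.ainf - ‖S.Binf‖) * ‖v‖ ^ 2 ≤ 0 := by
    rcases hv with hv | hv
    · linarith [S.Binf_posdef v hv]
    · linarith [S.Binf_negdef v hv]
  have h3 : ‖v‖ ^ 2 = 0 := le_antisymm (by nlinarith) (sq_nonneg _)
  simpa using h3

end LuSetting

/-- Lemma 2.7(ii): under (S), (F1∞)–(F3∞), (C1∞)–(C2∞) and
`ν∞ > 0`, given `h∞` with `(I−P⁰∞)A(z + h∞(z)) = θ` and the estimate
`|L(z + u) − ½(B(∞)u, u)_H| ≤ (a∞/8)‖z + u‖²`, the function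
`F∞(z, u⁺ + u⁻) = L(z + h∞(z) + u⁺ + u⁻) − L(z + h∞(z))` satisfies the stated
two-sided quadratic bounds. -/
theorem statement14 {X H : Type*} [NormedAddCommGroup X] [NormedSpace ℝ X]
    [NormedAddCommGroup H] [InnerProductSpace ℝ H] [CompleteSpace H]
    (S : LuSetting X H) (hν : S.H0 ≠ ⊥)
    (R₁ : ℝ) (hR₁ : 0 < R₁) (hR₁V : ∀ u : H, R₁ ≤ ‖u‖ → u ∈ S.V)
    (h : X → X)
    (hmem : ∀ z ∈ S.zdomCl R₁, h z ∈ S.Xpm)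
    (heq : ∀ z ∈ S.zdomCl R₁, S.Aperp (z + h z) = 0)
    (hquad : ∀ z : H, z ∈ S.H0 → R₁ ≤ ‖z‖ → ∀ u ∈ S.Hpm,
      |S.L (z + u) - 2⁻¹ * ⟪S.Binf u, u⟫| ≤ S.ainf / 8 * ‖z + u‖ ^ 2) :
    ∀ z ∈ S.zdomCl R₁, ∀ up ∈ S.Hp, ∀ um ∈ S.Hm,
      S.ainf / 4 * ‖up‖ ^ 2 - 2 * ‖S.Binf‖ * ‖um‖ ^ 2 -
          2 * ‖S.Binf‖ ^ 2 / S.ainf * ‖S.emb (h z)‖ ^ 2 -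
          S.ainf / 2 * ‖S.emb z‖ ^ 2 ≤
        S.L (S.emb z + S.emb (h z) + up + um) - S.L (S.emb z + S.emb (h z)) ∧
      S.L (S.emb z + S.emb (h z) + up + um) - S.L (S.emb z + S.emb (h z)) ≤
        2 * ‖S.Binf‖ * ‖up‖ ^ 2 - S.ainf / 4 * ‖um‖ ^ 2 +
          S.ainf / 2 * ‖S.emb z‖ ^ 2 +
          2 * ‖S.Binf‖ ^ 2 / S.ainf * ‖S.emb (h z)‖ ^ 2 := by
  intro z hzd up hup um hum
  obtain ⟨hz, hzR⟩ := hzd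
  have ha := S.ainf_pos
  have hh : S.emb (h z) ∈ S.Hp ⊔ S.Hm := hmem z ⟨hz, hzR⟩
  obtain ⟨p, hp, m, hm, hpm⟩ := Submodule.mem_sup.1 hh
  rw [← hpm]
  set z' := S.emb z
  by_cases hb : 2 * S.ainf ≤ ‖S.Binf‖
  swap
  · rw [not_le] at hb
    rw [S.eq_zero_of_norm_lt hb (Or.inl hp), S.eq_zero_of_norm_lt hb (Or.inr hm),
      S.eq_zero_of_norm_lt hb (Or.inl hup), S.eq_zero_of_norm_lt hb (Or.inr hum)]
    have : 0 ≤ S.ainf / 2 * ‖z'‖ ^ 2 := by positivity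
    constructor <;> simp <;> linarith
  have hp' : p + up ∈ S.Hp := S.Hp.add_mem hp hup
  have hm' : m + um ∈ S.Hm := S.Hm.add_mem hm hum
  have q1 := abs_le.1 (hquad z' hz hzR _ (Submodule.add_mem_sup hp' hm'))
  have q2 := abs_le.1 (hquad z' hz hzR _ (Submodule.add_mem_sup hp hm))
  rw [S.norm_sq_split hz hp' hm', S.inner_Binf_split hp' hm', S.inner_Binf_add_self,
    S.inner_Binf_add_self] at q1
  rw [S.norm_sq_split hz hp hm, S.inner_Binf_split hp hm] at q2
  have e1 : z' + (p + m) + up + um = z' + ((p + up) + (m + um)) := by abel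
  have e2 : ‖p + m‖ ^ 2 = ‖p‖ ^ 2 + ‖m‖ ^ 2 := by
    simpa using S.norm_sq_split S.H0.zero_mem hp hm
  rw [e1, e2]
  have n1 := mul_le_mul_of_nonneg_left (norm_add_sq_le_two_mul p up) ha.le
  have n2 := mul_le_mul_of_nonneg_left (norm_add_sq_le_two_mul m um) ha.le
  have c1 := abs_le.1 (S.abs_inner_Binf_le p up)
  have c2 := abs_le.1 (S.abs_inner_Binf_le m um)
  have c3 := abs_le.1 (S.abs_inner_Binf_le up up)
  have c4 := abs_le.1 (S.abs_inner_Binf_le um um)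
  -- Only `(a∞/4)‖z‖²` of the allowed `(a∞/2)‖z‖²` is used.
  have nz : 0 ≤ S.ainf * ‖z'‖ ^ 2 := by positivity
  have d1 := S.Binf_posdef up hup
  have d2 := S.Binf_negdef um hum
  constructor
  · have := scalar_bound (P := ‖up‖) (M := ‖um‖) (p := ‖p‖) (m := ‖m‖) ha hb
    linarith [q1.1, q2.2, c1.1, c2.1, c4.1]
  · have := scalar_bound (P := ‖um‖) (M := ‖up‖) (p := ‖m‖) (m := ‖p‖) ha hb
    linarith [q1.2, q2.1, c1.2, c2.2, c3.2]
end
end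

section
/- Assume (S), (F1∞)–(F3∞), (C1∞)–(C2∞), (D∞), ν∞ = 0 (so H = H⁺∞ ⊕ H⁻∞), and that there exist R > 0 and λ ∈ (0, a∞) such that ‖A(u) − B(∞)u‖ ≤ λ‖u‖ for all u ∈ X with ‖u‖ ≥ R. Then there exists R₂ ≥ R with {x ∈ H : ‖x‖ ≥ R₂} ⊂ V∞ such that: (i) [DL(u + v₂) − DL(u + v₁)](v₂ − v₁) ≤ −a∞‖v₂ − v₁‖² for all u ∈ H⁺∞ with ‖u‖ ≥ R₂ and all v₁, v₂ ∈ H⁻∞; (ii) DL(u + v)(u − v) ≥ a∞(‖u‖² + ‖v‖²) for all u ∈ H⁺∞ with ‖u‖ ≥ R₂ and all v ∈ H⁻∞; (iii) DL(u)(u) ≥ a∞‖u‖² for all u ∈ H⁺∞ with ‖u‖ ≥ R₂. -/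
/-!
Inequalities (ii) and (iii) only use the comparison of `A` with `B(∞)`. By density of `X` and
continuity of `DL`, the bound `‖A(x) - B(∞)x‖ ≤ λ‖x‖` gives
`|DL(w)(h) - (B(∞)w, h)| ≤ λ‖w‖‖h‖` for all `w, h ∈ H` with `w` far out (`abs_DL_sub_le`).
Taking `w = u + v`, `h = u - v`, the form contributes at least `2a∞(‖u‖² + ‖v‖²)` and, by
orthogonality, the error is at most `λ(‖u‖² + ‖v‖²)`; (iii) is the case `v = 0`.

For (i), condition (D∞) says that `B(x) → B(∞)` strongly as `‖x‖ → ∞` (`tendsto_B`), so by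
Banach–Steinhaus `‖B(x)‖` is bounded far out (`exists_B_bound`). On `H⁻∞` the compact part of `B(∞)`
is itself negative definite with gap `2a∞`, which makes the unit sphere of `H⁻∞` compact; strong
convergence is then uniform on it, and `(B(x)v, v) ≤ -a∞‖v‖²` on `H⁻∞` far out (`exists_B_neg`).
Approximating `u + v₁` and `u + v₂` by `x, y ∈ X`, the mean value theorem expresses
`DL(y)(y - x) - DL(x)(y - x)` as `(B(z)(y - x), y - x)` for some `z` on the segment, and the
segment is far out because `u ⟂ H⁻∞`. As `y - x → v₂ - v₁ ∈ H⁻∞` in `H` and `B(z)` stays bounded,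
the limit gives the claim (`DL_sub_le`).
-/

open Filter Topology Set RealInnerProductSpace

noncomputable section

/-! ### Operators along sequences -/

namespace LuSetting

/-- Strong convergence of operators is uniformly bounded (Banach–Steinhaus), hence may be
evaluated along a convergent sequence of arguments. -/
lemma tendsto_apply_of_strong {H : Type*} [NormedAddCommGroup H] [InnerProductSpace ℝ H]
    [CompleteSpace H] {T : ℕ → H →L[ℝ] H} {Tlim : H →L[ℝ] H}
    (hT : ∀ u, Tendsto (fun n => T n u) atTop (𝓝 (Tlim u)))
    {v : ℕ → H} {vlim : H} (hv : Tendsto v atTop (𝓝 vlim)) :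
    Tendsto (fun n => T n (v n)) atTop (𝓝 (Tlim vlim)) := by
  obtain ⟨C, hC⟩ := banach_steinhaus (g := T) fun u => by
    obtain ⟨C, hC⟩ := (hT u).norm.bddAbove_range
    exact ⟨C, fun n => hC ⟨n, rfl⟩⟩
  have h1 : Tendsto (fun n => T n (v n - vlim)) atTop (𝓝 0) := by
    refine squeeze_zero_norm (a := fun n => C * ‖v n - vlim‖) (fun n => ?_) ?_
    · exact (T n).le_of_opNorm_le (hC n) _
    · simpa using ((tendsto_iff_norm_sub_tendsto_zero.1 hv).const_mul C)
  simpa using h1.add (hT vlim)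

/-- A compact operator whose quadratic form is negative definite with a uniform gap on a closed
subspace forces the unit sphere of that subspace to be sequentially compact: the gap turns the
Cauchy property of the images into that of the vectors themselves. -/
lemma exists_subseq_of_compact {H : Type*} [NormedAddCommGroup H] [InnerProductSpace ℝ H]
    [CompleteSpace H] {Q : H →L[ℝ] H} (hQ : IsCompactOperator Q) {K : Submodule ℝ H}
    (hK : IsClosed (K : Set H)) {c : ℝ} (hc : 0 < c)
    (hneg : ∀ v ∈ K, ⟪Q v, v⟫ ≤ -(c * ‖v‖ ^ 2))
    (v : ℕ → H) (hvK : ∀ n, v n ∈ K) (hv1 : ∀ n, ‖v n‖ = 1) :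
    ∃ w ∈ K, ∃ φ : ℕ → ℕ, StrictMono φ ∧ Tendsto (v ∘ φ) atTop (𝓝 w) := by
  obtain ⟨y, -, φ, hφ, hy⟩ := (hQ.isCompact_closure_image_closedBall (1 : ℝ)).tendsto_subseq
    (x := fun n => Q (v n)) fun n => subset_closure ⟨v n, by simp [hv1], rfl⟩
  have hcs : CauchySeq (v ∘ φ) := by
    have hle : ∀ w ∈ K, c * ‖w‖ ≤ ‖Q w‖ := by
      intro w hw
      have h1 := hneg w hw
      have h2 := neg_le_of_abs_le (abs_real_inner_le_norm (Q w) w)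
      rcases (norm_nonneg w).eq_or_lt with h0 | h0
      · rw [← h0]; simp
      · nlinarith
    rw [Metric.cauchySeq_iff]
    intro ε hε
    obtain ⟨N, hN⟩ := Metric.cauchySeq_iff.1 hy.cauchySeq (c * ε) (by positivity)
    refine ⟨N, fun m hm n hn => ?_⟩
    have h1 := hN m hm n hn
    have h2 := hle (v (φ m) - v (φ n)) (K.sub_mem (hvK _) (hvK _))
    rw [dist_eq_norm] at h1 ⊢
    simp only [Function.comp, map_sub] at *
    exact lt_of_mul_lt_mul_left (h2.trans_lt h1) hc.le
  obtain ⟨w, hw⟩ := cauchySeq_tendsto_of_complete hcs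
  exact ⟨w, hK.mem_of_tendsto hw (Eventually.of_forall fun n => hvK _), φ, hφ, hw⟩

/-! ### The operators near infinity -/

variable {X H : Type*} [NormedAddCommGroup X] [NormedSpace ℝ X]
  [NormedAddCommGroup H] [InnerProductSpace ℝ H] [CompleteSpace H]
variable (S : LuSetting X H)

/-- Under (D∞), `B(x) → B(∞)` strongly as `‖x‖ → ∞`. -/
lemma tendsto_B (hD : S.Dinf) (x : ℕ → X) (hx : ∀ n, S.emb (x n) ∈ S.V)
    (hinf : Tendsto (fun n => ‖S.emb (x n)‖) atTop atTop) (u : H) :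
    Tendsto (fun n => S.B (x n) u) atTop (𝓝 (S.Binf u)) := by
  obtain ⟨P, Q, Pi, Qi, hB, hBi, -, -, -, -, -, hP, hQ, -⟩ := hD
  have h1 : Tendsto (fun n => Q (x n)) atTop (𝓝 Qi) := by
    rw [Metric.tendsto_atTop']
    intro ε hε
    obtain ⟨R, hR⟩ := hQ (ε / 2) (by positivity)
    obtain ⟨N, hN⟩ := eventually_atTop.1 (hinf.eventually_ge_atTop R)
    refine ⟨N, fun n hn => ?_⟩
    rw [dist_eq_norm]
    linarith [hR (x n) (hx n) (hN n hn.le)]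
  have h2 : Tendsto (fun n => Q (x n) u) atTop (𝓝 (Qi u)) :=
    ((ContinuousLinearMap.apply ℝ H u).continuous.tendsto Qi).comp h1
  have h3 := (hP x hx hinf u).add h2
  simpa [hBi, hB _ (hx _)] using h3

/-- A sequence of vectors of `X` whose norms in `H` exceed `n + R₀ + 1` lies in `V` and tends to
infinity. -/
lemma mem_V_and_tendsto {x : ℕ → X} (hx : ∀ n : ℕ, n + S.R₀ + 1 ≤ ‖S.emb (x n)‖) :
    (∀ n, S.emb (x n) ∈ S.V) ∧ Tendsto (fun n => ‖S.emb (x n)‖) atTop atTop := by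
  refine ⟨fun n => S.V_infty ?_, ?_⟩
  · have := hx n
    have : (0 : ℝ) ≤ n := n.cast_nonneg
    simp only [mem_ofPred_eq]; linarith
  · refine tendsto_atTop_mono (fun n => ?_) tendsto_natCast_atTop_atTop
    linarith [hx n, S.R₀_pos]

lemma exists_B_bound (hD : S.Dinf) :
    ∃ R₁ C : ℝ, ∀ x : X, R₁ ≤ ‖S.emb x‖ → ‖S.B x‖ ≤ C := by
  by_contra! h
  choose x hx hxB using fun n : ℕ => h (n + S.R₀ + 1) n
  obtain ⟨hV, hinf⟩ := S.mem_V_and_tendsto hx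
  obtain ⟨C, hC⟩ := banach_steinhaus (g := fun n => S.B (x n)) fun u => by
    obtain ⟨C, hC⟩ := (S.tendsto_B hD x hV hinf u).norm.bddAbove_range
    exact ⟨C, fun n => hC ⟨n, rfl⟩⟩
  obtain ⟨n, hn⟩ := exists_nat_gt C
  linarith [hC n, hxB n]

/-- Far from the origin, `B(x)` is negative definite on `H⁻∞` with the constant `a∞`: otherwise
unit vectors violating this would subconverge to a unit vector at which `B(∞)` violates its own
gap `2a∞`. -/
lemma exists_B_neg (hD : S.Dinf) :
    ∃ R₁ : ℝ, ∀ x : X, R₁ ≤ ‖S.emb x‖ → ∀ v ∈ S.Hm, ⟪S.B x v, v⟫ ≤ -(S.ainf * ‖v‖ ^ 2) := by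
  by_contra! h
  choose x hx v hvm hv using fun n : ℕ => h (n + S.R₀ + 1)
  obtain ⟨hV, hinf⟩ := S.mem_V_and_tendsto hx
  have hv0 : ∀ n, 0 < ‖v n‖ := fun n => by
    rw [norm_pos_iff]
    intro h0
    have := hv n
    simp [h0] at this
  set w : ℕ → H := fun n => ‖v n‖⁻¹ • v n with hw
  have hwm : ∀ n, w n ∈ S.Hm := fun n => S.Hm.smul_mem _ (hvm n)
  have hw1 : ∀ n, ‖w n‖ = 1 := fun n => by
    simp [hw, norm_smul, (hv0 n).ne']
  have hwB : ∀ n, -S.ainf ≤ ⟪S.B (x n) (w n), w n⟫ := fun n => by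
    have h1 : ⟪S.B (x n) (w n), w n⟫ = ‖v n‖⁻¹ ^ 2 * ⟪S.B (x n) (v n), v n⟫ := by
      simp only [hw, map_smul, real_inner_smul_left, real_inner_smul_right]; ring
    have h2 : -S.ainf = ‖v n‖⁻¹ ^ 2 * -(S.ainf * ‖v n‖ ^ 2) := by
      have := (hv0 n).ne'
      field_simp
    rw [h1, h2]
    exact mul_le_mul_of_nonneg_left (hv n).le (by positivity)
  obtain ⟨u, hu, φ, hφ, hlim⟩ : ∃ u ∈ S.Hm, ∃ φ : ℕ → ℕ, StrictMono φ ∧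
      Tendsto (w ∘ φ) atTop (𝓝 u) := by
    obtain ⟨P, Q, Pi, Qi, hB, hBi, -, hPi, -, hQi, -⟩ := hD
    refine exists_subseq_of_compact hQi S.Hm_closed (c := 2 * S.ainf)
      (by linarith [S.ainf_pos]) (fun y hy => ?_) w hwm hw1
    have h1 := S.Binf_negdef y hy
    rw [hBi, _root_.add_apply, inner_add_left] at h1
    rcases eq_or_ne y 0 with rfl | h0
    · simp
    · linarith [hPi y h0]
  have hu1 : ‖u‖ = 1 := tendsto_nhds_unique hlim.norm (by simp [hw1])
  have h3 : Tendsto (fun n => S.B (x (φ n)) (w (φ n))) atTop (𝓝 (S.Binf u)) :=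
    tendsto_apply_of_strong (T := fun n => S.B (x (φ n))) (v := w ∘ φ)
      (fun y => (S.tendsto_B hD x hV hinf y).comp hφ.tendsto_atTop) hlim
  have h4 : -S.ainf ≤ ⟪S.Binf u, u⟫ :=
    ge_of_tendsto' (h3.inner hlim) fun n => hwB (φ n)
  have h5 := S.Binf_negdef u hu
  rw [hu1] at h5
  linarith [S.ainf_pos]

/-! ### Estimates for the differential -/

lemma exists_seq_tendsto (u : H) :
    ∃ x : ℕ → X, Tendsto (fun n => S.emb (x n)) atTop (𝓝 u) := by
  obtain ⟨y, hy, hlim⟩ := mem_closure_iff_seq_limit.1 (S.emb_dense u)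
  choose x hx using hy
  exact ⟨x, by simpa [hx] using hlim⟩

lemma tendsto_DL {w h : ℕ → H} {w' h' : H} (hV : w' ∈ S.V) (hw : Tendsto w atTop (𝓝 w'))
    (hh : Tendsto h atTop (𝓝 h')) :
    Tendsto (fun n => S.DL (w n) (h n)) atTop (𝓝 (S.DL w' h')) := by
  have h1 : ContinuousAt (fun p : H × H => S.DL p.1 p.2) (w', h') :=
    S.DL_cont.continuousAt ((S.V_open.prod isOpen_univ).mem_nhds ⟨hV, trivial⟩)
  exact h1.tendsto.comp (hw.prodMk_nhds hh)

/-- The bound on `A - B(∞)` over `X` passes to `DL` at every point of `H`, by density. -/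
lemma abs_DL_sub_le {R lam : ℝ}
    (hA : ∀ u : X, R ≤ ‖S.emb u‖ → ‖S.emb (S.A u) - S.Binf (S.emb u)‖ ≤ lam * ‖S.emb u‖)
    {w : H} (hw : R < ‖w‖) (hV : w ∈ S.V) (h : H) :
    |S.DL w h - ⟪S.Binf w, h⟫| ≤ lam * ‖w‖ * ‖h‖ := by
  obtain ⟨x, hx⟩ := S.exists_seq_tendsto w
  obtain ⟨y, hy⟩ := S.exists_seq_tendsto h
  have h1 : Tendsto (fun n => |S.DL (S.emb (x n)) (S.emb (y n)) -
      ⟪S.Binf (S.emb (x n)), S.emb (y n)⟫|) atTop (𝓝 |S.DL w h - ⟪S.Binf w, h⟫|) :=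
    ((S.tendsto_DL hV hx hy).sub
      (((S.Binf.continuous.tendsto w).comp hx).inner hy)).abs
  have h2 := (hx.norm.const_mul lam).mul hy.norm
  refine le_of_tendsto_of_tendsto h1 h2 ?_
  filter_upwards [hx.norm.eventually_const_lt hw, hx.eventually_mem (S.V_open.mem_nhds hV)]
    with n hn hnV
  rw [S.A_repr _ hnV, ← inner_sub_left]
  exact (abs_real_inner_le_norm _ _).trans
    (mul_le_mul_of_nonneg_right (hA _ hn.le) (norm_nonneg _))

/-- Mean value theorem for `t ↦ DL(x + td)(d)` on a segment inside `X ∩ V`. -/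
lemma exists_DL_sub_eq (x d : X)
    (hseg : ∀ t ∈ Icc (0 : ℝ) 1, S.emb (x + t • d) ∈ S.V) :
    ∃ t ∈ Icc (0 : ℝ) 1, S.DL (S.emb (x + d)) (S.emb d) - S.DL (S.emb x) (S.emb d) =
      ⟪S.B (x + t • d) (S.emb d), S.emb d⟫ := by
  set g : ℝ → ℝ := fun t => ⟪S.emb (S.A (x + t • d)), S.emb d⟫ with hg
  have hder : ∀ t ∈ Icc (0 : ℝ) 1,
      HasDerivAt g ⟪S.B (x + t • d) (S.emb d), S.emb d⟫ t := by
    intro t ht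
    have h1 := S.DA_deriv _ (hseg t ht) d
    have h2 : HasDerivAt (fun s : ℝ => S.A (x + s • d)) (S.DA (x + t • d) d) t := by
      rw [hasDerivAt_iff_tendsto_slope_zero]
      refine h1.congr fun s => ?_
      rw [add_smul, add_assoc]
    have h3 := (S.emb.hasFDerivAt.comp_hasDerivAt t h2).inner ℝ (hasDerivAt_const t (S.emb d))
    simpa [S.B_repr _ (hseg t ht), Function.comp_def] using h3
  obtain ⟨t, ht, heq⟩ := exists_hasDerivAt_eq_slope g _ zero_lt_one
    (fun t ht => (hder t ht).continuousAt.continuousWithinAt)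
    (fun t ht => hder t (Ioo_subset_Icc_self ht))
  refine ⟨t, Ioo_subset_Icc_self ht, ?_⟩
  have h0 := hseg 0 (by simp)
  have h1 := hseg 1 (by simp)
  rw [heq]
  simp only [zero_smul, add_zero, one_smul] at h0 h1
  rw [S.A_repr _ h0, S.A_repr _ h1]
  simp [hg]

lemma norm_le_norm_add_s16 {u v : H} (hu : u ∈ S.Hp) (hv : v ∈ S.Hm) : ‖u‖ ≤ ‖u + v‖ := by
  have := norm_add_sq_eq_norm_sq_add_norm_sq_real (S.orth_pm u hu v hv)
  nlinarith [norm_nonneg u, norm_nonneg v, norm_nonneg (u + v)]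

/-- Monotonicity of `DL` in the negative directions. The endpoints are approximated from `X`; the
approximating directions need not lie in `H⁻∞`, which is repaired by the uniform bound on `B`. -/
lemma DL_sub_le {R₁ C : ℝ} (hR₁ : S.R₀ ≤ R₁)
    (hC : ∀ x : X, R₁ ≤ ‖S.emb x‖ → ‖S.B x‖ ≤ C)
    (hneg : ∀ x : X, R₁ ≤ ‖S.emb x‖ → ∀ v ∈ S.Hm, ⟪S.B x v, v⟫ ≤ -(S.ainf * ‖v‖ ^ 2))
    {u v₁ v₂ : H} (hu : u ∈ S.Hp) (huR : R₁ + 1 ≤ ‖u‖) (hv₁ : v₁ ∈ S.Hm) (hv₂ : v₂ ∈ S.Hm) :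
    S.DL (u + v₂) (v₂ - v₁) - S.DL (u + v₁) (v₂ - v₁) ≤ -(S.ainf * ‖v₂ - v₁‖ ^ 2) := by
  have hmemV : ∀ v ∈ S.Hm, u + v ∈ S.V := fun v hv => S.V_infty <| by
    have := S.norm_le_norm_add_s16 hu hv
    simp only [mem_ofPred_eq]; linarith
  obtain ⟨x, hx⟩ := S.exists_seq_tendsto (u + v₁)
  obtain ⟨y, hy⟩ := S.exists_seq_tendsto (u + v₂)
  set v := v₂ - v₁ with hvdef
  have hd : Tendsto (fun n => S.emb (y n - x n)) atTop (𝓝 v) := by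
    simpa [hvdef] using hy.sub hx
  have hlhs := (S.tendsto_DL (hmemV v₂ hv₂) hy hd).sub (S.tendsto_DL (hmemV v₁ hv₁) hx hd)
  have hrhs : Tendsto (fun n => -(S.ainf * ‖v‖ ^ 2) +
      C * ‖S.emb (y n - x n) - v‖ * (‖S.emb (y n - x n)‖ + ‖v‖)) atTop
      (𝓝 (-(S.ainf * ‖v‖ ^ 2))) := by
    simpa using (((tendsto_iff_norm_sub_tendsto_zero.1 hd).const_mul C).mul
      (hd.norm.add_const ‖v‖)).const_add (-(S.ainf * ‖v‖ ^ 2))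
  refine le_of_tendsto_of_tendsto hlhs hrhs ?_
  have half : (0 : ℝ) < 1 / 2 := by norm_num
  filter_upwards [Metric.tendsto_nhds.1 hx _ half, Metric.tendsto_nhds.1 hy _ half] with n hxn hyn
  rw [dist_eq_norm] at hxn hyn
  -- the segment from `x n` to `y n` stays within `1/2` of the one from `u + v₁` to `u + v₂`,
  -- all of whose points have norm at least `‖u‖`
  have hfar : ∀ t ∈ Icc (0 : ℝ) 1, R₁ < ‖S.emb (x n + t • (y n - x n))‖ := by
    intro t ht
    have hm : (1 - t) • v₁ + t • v₂ ∈ S.Hm :=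
      S.Hm.add_mem (S.Hm.smul_mem _ hv₁) (S.Hm.smul_mem _ hv₂)
    have h1 := S.norm_le_norm_add_s16 hu hm
    have h2 : u + ((1 - t) • v₁ + t • v₂) = S.emb (x n + t • (y n - x n)) -
        ((1 - t) • (S.emb (x n) - (u + v₁)) + t • (S.emb (y n) - (u + v₂))) := by
      simp only [map_add, map_smul, map_sub]; module
    have h3 : ‖(1 - t) • (S.emb (x n) - (u + v₁)) + t • (S.emb (y n) - (u + v₂))‖ ≤ 1 / 2 := by
      refine (norm_add_le _ _).trans ?_
      rw [norm_smul, norm_smul, Real.norm_of_nonneg ht.1,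
        Real.norm_of_nonneg (sub_nonneg.2 ht.2)]
      nlinarith [ht.1, ht.2]
    rw [h2] at h1
    have h4 := norm_sub_le (S.emb (x n + t • (y n - x n)))
      ((1 - t) • (S.emb (x n) - (u + v₁)) + t • (S.emb (y n) - (u + v₂)))
    linarith
  obtain ⟨t, ht, heq⟩ := S.exists_DL_sub_eq (x n) (y n - x n)
    fun t ht => S.V_infty (hR₁.trans_lt (hfar t ht))
  rw [add_sub_cancel] at heq
  rw [heq]
  set d := S.emb (y n - x n)
  set T := S.B (x n + t • (y n - x n))
  have hT : ‖T‖ ≤ C := hC _ (hfar t ht).le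
  have h5 : ⟪T v, v⟫ ≤ -(S.ainf * ‖v‖ ^ 2) :=
    hneg _ (hfar t ht).le v (S.Hm.sub_mem hv₂ hv₁)
  have h6 : ⟪T d, d⟫ = ⟪T v, v⟫ + (⟪T (d - v), d⟫ + ⟪T v, d - v⟫) := by
    simp only [map_sub, inner_sub_left, inner_sub_right]; ring
  have h7 : ⟪T (d - v), d⟫ ≤ C * ‖d - v‖ * ‖d‖ :=
    (real_inner_le_norm _ _).trans
      (mul_le_mul_of_nonneg_right (T.le_of_opNorm_le hT _) (norm_nonneg _))
  have h8 : ⟪T v, d - v⟫ ≤ C * ‖v‖ * ‖d - v‖ :=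
    (real_inner_le_norm _ _).trans
      (mul_le_mul_of_nonneg_right (T.le_of_opNorm_le hT _) (norm_nonneg _))
  rw [h6]
  linarith

lemma le_DL_sub {R lam : ℝ} (hlam : lam < S.ainf)
    (hA : ∀ u : X, R ≤ ‖S.emb u‖ → ‖S.emb (S.A u) - S.Binf (S.emb u)‖ ≤ lam * ‖S.emb u‖)
    {u v : H} (hu : u ∈ S.Hp) (hv : v ∈ S.Hm) (hR : R < ‖u‖) (hR₀ : S.R₀ < ‖u‖) :
    S.ainf * (‖u‖ ^ 2 + ‖v‖ ^ 2) ≤ S.DL (u + v) (u - v) := by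
  have hle := S.norm_le_norm_add_s16 hu hv
  have h1 := neg_le_of_abs_le (S.abs_DL_sub_le hA (hR.trans_le hle)
    (S.V_infty (hR₀.trans_le hle)) (u - v))
  have horth := S.orth_pm u hu v hv
  have hadd := norm_add_sq_eq_norm_sq_add_norm_sq_real horth
  have hsub : ‖u - v‖ = ‖u + v‖ := by
    rw [← sq_eq_sq₀ (norm_nonneg _) (norm_nonneg _), norm_sub_sq_real, norm_add_sq_real, horth]
    ring
  have h2 : ⟪S.Binf (u + v), u - v⟫ = ⟪S.Binf u, u⟫ - ⟪S.Binf v, v⟫ := by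
    have h5 : ⟪S.Binf v, u⟫ = 0 := by
      rw [real_inner_comm, S.orth_pm u hu _ (S.Binf_Hm v hv)]
    simp only [map_add, inner_add_left, inner_sub_right, S.orth_pm _ (S.Binf_Hp u hu) v hv, h5]
    ring
  have h3 := S.Binf_posdef u hu
  have h4 := S.Binf_negdef v hv
  rw [h2, hsub, mul_assoc, hadd] at h1
  nlinarith [sq_nonneg ‖u‖, sq_nonneg ‖v‖]

end LuSetting

/-- Lemma 2.16: under (S), (F1∞)–(F3∞), (C1∞)–(C2∞), (D∞),
`ν∞ = 0` and `‖A(u) − B(∞)u‖ ≤ λ‖u‖` for `u ∈ X` with `‖u‖ ≥ R`, there is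
`R₂ ≥ R` with `{‖x‖ ≥ R₂} ⊆ V∞` such that the three structural inequalities
(i)–(iii) hold for `DL`. -/
theorem statement16 {X H : Type*} [NormedAddCommGroup X] [NormedSpace ℝ X]
    [NormedAddCommGroup H] [InnerProductSpace ℝ H] [CompleteSpace H]
    (S : LuSetting X H) (hD : S.Dinf) (hν : S.H0 = ⊥)
    (R lam : ℝ) (hR : 0 < R) (hlam0 : 0 < lam) (hlam : lam < S.ainf)
    (hA : ∀ u : X, R ≤ ‖S.emb u‖ → ‖S.emb (S.A u) - S.Binf (S.emb u)‖ ≤ lam * ‖S.emb u‖) :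
    ∃ R₂ ≥ R, (∀ x : H, R₂ ≤ ‖x‖ → x ∈ S.V) ∧
      -- (i)
      (∀ u ∈ S.Hp, R₂ ≤ ‖u‖ → ∀ v₁ ∈ S.Hm, ∀ v₂ ∈ S.Hm,
        S.DL (u + v₂) (v₂ - v₁) - S.DL (u + v₁) (v₂ - v₁) ≤
          -(S.ainf * ‖v₂ - v₁‖ ^ 2)) ∧
      -- (ii)
      (∀ u ∈ S.Hp, R₂ ≤ ‖u‖ → ∀ v ∈ S.Hm,
        S.ainf * (‖u‖ ^ 2 + ‖v‖ ^ 2) ≤ S.DL (u + v) (u - v)) ∧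
      -- (iii)
      (∀ u ∈ S.Hp, R₂ ≤ ‖u‖ → S.ainf * ‖u‖ ^ 2 ≤ S.DL u u) := by
  obtain ⟨r₁, C, hC⟩ := S.exists_B_bound hD
  obtain ⟨r₂, hneg⟩ := S.exists_B_neg hD
  set R₁ := max (max R S.R₀) (max r₁ r₂) with hR₁
  have hR' : R ≤ R₁ := (le_max_left _ _).trans (le_max_left _ _)
  have hR₀ : S.R₀ ≤ R₁ := (le_max_right _ _).trans (le_max_left _ _)
  have hr₁ : r₁ ≤ R₁ := (le_max_left _ _).trans (le_max_right _ _)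
  have hr₂ : r₂ ≤ R₁ := (le_max_right _ _).trans (le_max_right _ _)
  have key : ∀ u ∈ S.Hp, R₁ + 1 ≤ ‖u‖ → ∀ v ∈ S.Hm,
      S.ainf * (‖u‖ ^ 2 + ‖v‖ ^ 2) ≤ S.DL (u + v) (u - v) := fun u hu huR v hv =>
    S.le_DL_sub hlam hA hu hv (by linarith) (by linarith)
  refine ⟨R₁ + 1, by linarith, fun x hx => S.V_infty ?_, ?_, key, fun u hu huR => ?_⟩
  · simp only [mem_ofPred_eq]; linarith
  · intro u hu huR v₁ hv₁ v₂ hv₂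
    exact S.DL_sub_le hR₀ (fun x hx => hC x (hr₁.trans hx)) (fun x hx => hneg x (hr₂.trans hx))
      hu huR hv₁ hv₂
  · simpa using key u hu huR 0 S.Hm.zero_mem
end
end

section
/- Let H be a real Hilbert space, let 0 < R' < R, a∞ > 0, and let L be continuous and continuously directional differentiable on {u ∈ H : ‖u‖ > R'}, with L(u) > 0 and DL(u)(u) ≥ a∞‖u‖² for all u ∈ H with ‖u‖ ≥ R. Then the map ψ defined by ψ(u) = (√(L(u))/‖u‖)·u is injective on {u ∈ H : ‖u‖ ≥ R}. -/
/-!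
If `ψ u = ψ v`, taking norms gives `L u = L v`, and cancelling the common positive factor
`√(L u)` shows that `u` and `v` lie on the same ray: `u = ‖u‖ • e`, `v = ‖v‖ • e` for a unit
vector `e`. Along this ray `t ↦ L (t • e)` has derivative `DL (t • e) (t • e) / t ≥ ainf * t > 0`
for `t ≥ R` (`hasDerivAt_ray`), so it is strictly increasing on `[R, ∞)`, and `L u = L v` forces
`‖u‖ = ‖v‖`.
-/

open Filter Topology Set RealInnerProductSpace

noncomputable section

/-- The derivative of a function along a ray, expressed through its derivative at `s • e` in the
radial direction `s • e` itself; rescaling the parameter by `s` avoids any appeal to homogeneity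
of the directional derivative. -/
lemma hasDerivAt_ray {H : Type*} [NormedAddCommGroup H] [NormedSpace ℝ H]
    {L : H → ℝ} {e : H} {s d : ℝ} (hs : s ≠ 0)
    (h : Tendsto (fun t : ℝ => (L (s • e + t • s • e) - L (s • e)) / t) (𝓝[≠] 0) (𝓝 d)) :
    HasDerivAt (fun t : ℝ => L (t • e)) (d / s) s := by
  have h1 : HasDerivAt (fun t : ℝ => L (t • s • e)) d (s / s) := by
    rw [div_self hs, hasDerivAt_iff_tendsto_slope_zero]
    refine h.congr fun t => ?_
    rw [add_smul, one_smul, smul_eq_mul, div_eq_inv_mul]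
  have h2 := HasDerivAt.comp (h := fun t : ℝ => t / s) s h1 ((hasDerivAt_id' s).div_const s)
  have hf : (fun t : ℝ => L (t • s • e)) ∘ (fun t : ℝ => t / s) = fun t : ℝ => L (t • e) := by
    funext t
    simp [smul_smul, div_mul_cancel₀ _ hs]
  rwa [hf, mul_one_div] at h2

/-- if `L` is continuous and continuously directional
differentiable on `{u : ‖u‖ > R'}` with `L(u) > 0` and `DL(u)(u) ≥ a∞‖u‖²` for
`‖u‖ ≥ R`, then `ψ(u) = (√(L(u))/‖u‖)·u` is injective on `{u : ‖u‖ ≥ R}`. -/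
theorem statement17 {H : Type*} [NormedAddCommGroup H] [InnerProductSpace ℝ H]
    [CompleteSpace H]
    (R' R ainf : ℝ) (hR' : 0 < R') (hRR : R' < R) (ha : 0 < ainf)
    (L : H → ℝ) (DL : H → H → ℝ)
    (hLc : ContinuousOn L {u : H | R' < ‖u‖})
    (hderiv : ∀ x : H, R' < ‖x‖ → ∀ u : H,
      Filter.Tendsto (fun t : ℝ => (L (x + t • u) - L x) / t) (𝓝[≠] 0) (𝓝 (DL x u)))
    (hDc : ContinuousOn (fun p : H × H => DL p.1 p.2) ({u : H | R' < ‖u‖} ×ˢ Set.univ))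
    (hpos : ∀ u : H, R ≤ ‖u‖ → 0 < L u)
    (hcoer : ∀ u : H, R ≤ ‖u‖ → ainf * ‖u‖ ^ 2 ≤ DL u u) :
    Set.InjOn (fun u : H => (Real.sqrt (L u) / ‖u‖) • u) {u : H | R ≤ ‖u‖} := by
  intro u hu v hv huv
  have hR : 0 < R := hR'.trans hRR
  have hu' : R ≤ ‖u‖ := hu
  have hv' : R ≤ ‖v‖ := hv
  have hu0 : 0 < ‖u‖ := hR.trans_le hu'
  have hv0 : 0 < ‖v‖ := hR.trans_le hv'
  have huv' : (√(L u) / ‖u‖) • u = (√(L v) / ‖v‖) • v := huv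
  have hnorm : ∀ w : H, 0 < ‖w‖ → ‖(√(L w) / ‖w‖) • w‖ = √(L w) := fun w hw => by
    rw [norm_smul, Real.norm_of_nonneg (by positivity), div_mul_cancel₀ _ hw.ne']
  have hsqrt : √(L u) = √(L v) := by
    rw [← hnorm u hu0, ← hnorm v hv0, huv']
  have hL : L u = L v := (Real.sqrt_inj (hpos u hu').le (hpos v hv').le).1 hsqrt
  have hdir : ‖u‖⁻¹ • u = ‖v‖⁻¹ • v := by
    rw [hsqrt, div_eq_mul_inv, div_eq_mul_inv, mul_smul, mul_smul] at huv'
    exact smul_right_injective H (Real.sqrt_pos.2 (hpos v hv')).ne' huv'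
  obtain ⟨e, he⟩ : ∃ e : H, e = ‖u‖⁻¹ • u := ⟨_, rfl⟩
  have hue : ‖u‖ • e = u := by rw [he, smul_inv_smul₀ hu0.ne']
  have hve : ‖v‖ • e = v := by rw [he, hdir, smul_inv_smul₀ hv0.ne']
  have hen : ‖e‖ = 1 := by rw [he, norm_smul, norm_inv, norm_norm, inv_mul_cancel₀ hu0.ne']
  have hte : ∀ t : ℝ, R ≤ t → ‖t • e‖ = t := fun t ht => by
    rw [norm_smul, hen, mul_one, Real.norm_of_nonneg (hR.le.trans ht)]
  have hd : ∀ t : ℝ, R ≤ t →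
      HasDerivAt (fun t : ℝ => L (t • e)) (DL (t • e) (t • e) / t) t := fun t ht =>
    hasDerivAt_ray (hR.trans_le ht).ne'
      (hderiv (t • e) (by rw [hte t ht]; exact hRR.trans_le ht) (t • e))
  have hmono : StrictMonoOn (fun t : ℝ => L (t • e)) (Ici R) := by
    refine strictMonoOn_of_deriv_pos (convex_Ici R)
      (fun t ht => (hd t ht).continuousAt.continuousWithinAt) fun t ht => ?_
    have ht' : R ≤ t := interior_subset ht
    have ht0 : 0 < t := hR.trans_le ht'
    have hc := hcoer (t • e) (by rw [hte t ht']; exact ht')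
    rw [hte t ht'] at hc
    rw [(hd t ht').deriv]
    exact div_pos (lt_of_lt_of_le (by positivity) hc) ht0
  have hnn : ‖u‖ = ‖v‖ := hmono.injOn hu' hv' (by
    rw [hue, hve, hL])
  rw [← hue, hnn, hve]
end
end
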